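/- Let H be a Hopf algebra over a field k and π_i : H → A_i (i ∈ I) Hopf algebra morphisms. The family is jointly inner faithful if and only if the intersection over all words i ∈ L_I of the kernels ker π_i is zero, where for i = i_1⋯i_k, π_i = (ρ_{i_1} ⊗ ⋯ ⊗ ρ_{i_k}) ∘ Δ^{(k)} with ρ_i = π_i for i ∈ I and ρ_{i*} = π_i ∘ S for i* ∈ I*. -/

import Mathlib

/-!
The common kernel `K` of all word maps is the largest Hopf ideal on which every `π i` vanishes,
and both sides of the equivalence say that this ideal is zero.

Any Hopf ideal `J` in the kernels of the `π i` lies in `K`, by induction on the word: each letter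
map kills `J` because `S(J) ⊆ J`, and `Δ(J) ⊆ J ⊗ H + H ⊗ J` (`wordMap_eq_zero_of_mem`).

Conversely `K` is itself such a Hopf ideal (`isHopfIdeal_wordKernel`).
* `K` is a left ideal, which is all that `Ideal` asks for in a noncommutative ring, because letter
  maps are multiplicative or antimultiplicative and `Δ` is multiplicative (`wordMap_mul`).
* `K` is a coideal because `(π_w ⊗ π_v) ∘ Δ` factors through `π_{wv}` by coassociativity
  (`wordMap_append`), while over a field the common kernel of the maps `π_w ⊗ π_v` is contained in
  `K ⊗ H + H ⊗ K` (`mem_sup_of_map_eq_zero`).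
* `S(K) ⊆ K` because `π_w ∘ S` factors through the word map of the reversed word
  (`wordMap_antipode`). This uses that the antipode reverses comultiplication
  (`comul_comp_antipode`) and commutes with bialgebra maps (`antipode_comp_bialgHom`).
-/

open TensorProduct

section Word

variable {k : Type} [Field k] {I : Type} {H : Type} [Ring H] [HopfAlgebra k H]
variable (k) (A : I → Type) [∀ i, Ring (A i)] [∀ i, HopfAlgebra k (A i)]

/-- Underlying letter of a letter or its formal adjoint. -/
def letterIndex : I ⊕ I → I := Sum.elim id id

/-- The codomain `A_{i_1} ⊗ ⋯ ⊗ A_{i_k}` (right-nested, terminated by `k`; as a vector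
space, so that `A_{i*} = A_i^{op}` has the same underlying space as `A_i`)
attached to a word in letters from `I` and their formal adjoints. -/
noncomputable def wordSpace : List (I ⊕ I) → ModuleCat k
  | [] => ModuleCat.of k k
  | a :: w => ModuleCat.of k (TensorProduct k (A (letterIndex a)) (wordSpace w))

variable {A} {k}

/-- The map attached to a single letter: `π_i` for a plain letter `i`, and
`π_i ∘ S` (valued in `A_i^{op}`, which has the same underlying vector space) for
the formal adjoint `i*`. -/
noncomputable def letterMap (π : ∀ i, H →ₐc[k] A i) (a : I ⊕ I) : H →ₗ[k] A (letterIndex a) :=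
  match a with
  | Sum.inl i => (π i).toLinearMap
  | Sum.inr i => (π i).toLinearMap ∘ₗ HopfAlgebra.antipode (R := k)

/-- The word map `π_𝐢 = (π_{i_1} ⊗ ⋯ ⊗ π_{i_k}) ∘ Δ^{(k)}` (with antipode twists on
starred letters), built by iterated comultiplication. -/
noncomputable def wordMap (π : ∀ i, H →ₐc[k] A i) :
    ∀ w : List (I ⊕ I), H →ₗ[k] wordSpace k A w
  | [] => Coalgebra.counit
  | a :: w => TensorProduct.map (letterMap π a) (wordMap π w) ∘ₗ Coalgebra.comul

end Word

/-- A Hopf ideal of a Hopf algebra `L` over `k`: a two-sided ideal `I` with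
`ε(I) = 0`, `Δ(I) ⊆ I ⊗ L + L ⊗ I` and `S(I) ⊆ I`. -/
def IsHopfIdeal {k L : Type} [Field k] [Ring L] [HopfAlgebra k L] (I : Ideal L) : Prop :=
  (∀ x ∈ I, Coalgebra.counit (R := k) x = 0) ∧
  (∀ x ∈ I, Coalgebra.comul (R := k) x ∈
      LinearMap.range ((Submodule.restrictScalars k I).subtype.rTensor L) ⊔
        LinearMap.range ((Submodule.restrictScalars k I).subtype.lTensor L)) ∧
  (∀ x ∈ I, HopfAlgebra.antipode (R := k) x ∈ I)

/-- A family of algebra maps `π_i : L → A_i` out of a Hopf algebra is jointly inner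
faithful if the maps do not simultaneously factor through a proper Hopf quotient of `L`;
equivalently, the only Hopf ideal of `L` contained in all the kernels is zero. -/
def JointlyInnerFaithful (k : Type) [Field k] {L : Type} [Ring L] [HopfAlgebra k L]
    {ι : Type} {A : ι → Type} [∀ i, Ring (A i)] [∀ i, Algebra k (A i)]
    (π : ∀ i, L →ₐ[k] A i) : Prop :=
  ∀ J : Ideal L, IsHopfIdeal (k := k) J → (∀ i, ∀ x ∈ J, π i x = 0) → J = ⊥

/-! ### The antipode in convolution algebras -/

section ConvolutionAntipode

open Coalgebra HopfAlgebra WithConv LinearMap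

variable {k : Type} [Field k]

/-- An algebra map `g` out of a Hopf algebra has convolution inverse `g ∘ S`. -/
lemma toConv_comp_antipode_mul {H B : Type} [Ring H] [HopfAlgebra k H] [Ring B] [Algebra k B]
    (g : H →ₐ[k] B) :
    toConv (g.toLinearMap ∘ₗ antipode k) * toConv g.toLinearMap = 1 := by
  have h := algHom_comp_convMul_distrib g (toConv (antipode k)) (toConv LinearMap.id)
  have h1 : g.toLinearMap ∘ₗ (1 : WithConv (H →ₗ[k] H)).ofConv =
      (1 : WithConv (H →ₗ[k] B)).ofConv := by
    ext; simp
  rw [antipode_mul_id, h1] at h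
  exact (ofConv_injective h).symm

lemma antipode_comp_bialgHom {H B : Type} [Ring H] [HopfAlgebra k H] [Ring B] [HopfAlgebra k B]
    (f : H →ₐc[k] B) :
    antipode k ∘ₗ f.toLinearMap = f.toLinearMap ∘ₗ antipode k := by
  -- Both sides are convolution inverses of `f`.
  apply toConv_injective
  symm
  apply left_inv_eq_right_inv (a := toConv f.toLinearMap)
  · exact toConv_comp_antipode_mul (f : H →ₐ[k] B)
  · have h := convMul_comp_coalgHom_distrib (toConv LinearMap.id)
      (toConv (antipode k (A := B))) f.toCoalgHom
    rw [id_mul_antipode, convOne_comp_coalgHom] at h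
    exact (ofConv_injective h).symm

/-- The antipode is an anti-homomorphism of coalgebras. In the convolution algebra of maps
`H → H ⊗ H`, the comultiplication is the product `ι₁ * ι₂` of the two inclusions, so its inverse
`Δ ∘ S` is `(ι₂ ∘ S) * (ι₁ ∘ S)`. -/
lemma comul_comp_antipode {H : Type} [Ring H] [HopfAlgebra k H] :
    (comul ∘ₗ antipode k : H →ₗ[k] H ⊗[k] H) =
      TensorProduct.map (antipode k) (antipode k) ∘ₗ
        (TensorProduct.comm k H H).toLinearMap ∘ₗ comul := by
  let i₁ : H →ₐ[k] H ⊗[k] H := Algebra.TensorProduct.includeLeft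
  let i₂ : H →ₐ[k] H ⊗[k] H := Algebra.TensorProduct.includeRight
  have h12 : toConv (comul : H →ₗ[k] H ⊗[k] H) =
      toConv i₁.toLinearMap * toConv i₂.toLinearMap := by
    ext x
    rw [(ℛ k x).convMul_apply]
    simp [i₁, i₂, (ℛ k x).eq]
  have h21 : toConv (TensorProduct.map (antipode k) (antipode k) ∘ₗ
        (TensorProduct.comm k H H).toLinearMap ∘ₗ comul : H →ₗ[k] H ⊗[k] H) =
      toConv (i₂.toLinearMap ∘ₗ antipode k) * toConv (i₁.toLinearMap ∘ₗ antipode k) := by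
    ext x
    rw [(ℛ k x).convMul_apply]
    conv_lhs => simp [← (ℛ k x).eq]
    simp [i₁, i₂]
  apply toConv_injective
  symm
  apply left_inv_eq_right_inv (a := toConv (comul : H →ₗ[k] H ⊗[k] H))
  · rw [h21, h12, mul_assoc, ← mul_assoc (toConv (i₁.toLinearMap ∘ₗ antipode k)),
      toConv_comp_antipode_mul, one_mul, toConv_comp_antipode_mul]
  · exact comul_right_inv

end ConvolutionAntipode

/-! ### Kernels of tensor products of linear maps -/

section TensorKernel

variable {k : Type} [Field k]

/-- Over a field, tensoring a jointly injective family with `W` keeps it jointly injective: in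
coordinates with respect to a basis of `W`, `f i ⊗ id` acts as `f i` on each coefficient. -/
lemma eq_zero_of_rTensor_eq_zero {ι V W : Type} {U : ι → Type}
    [AddCommGroup V] [Module k V] [AddCommGroup W] [Module k W]
    [∀ i, AddCommGroup (U i)] [∀ i, Module k (U i)]
    (f : ∀ i, V →ₗ[k] U i) (hf : ∀ v, (∀ i, f i v = 0) → v = 0)
    (t : V ⊗[k] W) (ht : ∀ i, (f i).rTensor W t = 0) : t = 0 := by
  classical
  let b := Module.Basis.ofVectorSpace k W
  have key : ∀ i (s : V ⊗[k] W) j, TensorProduct.equivFinsuppOfBasisRight b ((f i).rTensor W s) j =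
      f i (TensorProduct.equivFinsuppOfBasisRight b s j) := by
    intro i s j
    induction s with
    | zero => simp
    | tmul x y => simp
    | add x y hx hy => simp only [map_add, Finsupp.add_apply, hx, hy]
  apply (TensorProduct.equivFinsuppOfBasisRight b).injective
  rw [map_zero]
  ext j
  apply hf
  intro i
  rw [← key, ht]
  simp

lemma eq_zero_of_map_eq_zero {ι V : Type} {U : ι → Type}
    [AddCommGroup V] [Module k V] [∀ i, AddCommGroup (U i)] [∀ i, Module k (U i)]
    (f : ∀ i, V →ₗ[k] U i) (hf : ∀ v, (∀ i, f i v = 0) → v = 0)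
    (t : V ⊗[k] V) (ht : ∀ i j, TensorProduct.map (f i) (f j) t = 0) : t = 0 := by
  apply eq_zero_of_rTensor_eq_zero f hf
  intro i
  apply (TensorProduct.comm k _ _).injective
  rw [map_zero]
  apply eq_zero_of_rTensor_eq_zero f hf
  intro j
  have h : (f j).rTensor (U i) ∘ₗ (TensorProduct.comm k (U i) V).toLinearMap ∘ₗ
      (f i).rTensor V = (TensorProduct.comm k _ _).toLinearMap ∘ₗ
        TensorProduct.map (f i) (f j) := by
    ext; simp
  have := LinearMap.congr_fun h t
  simpa [ht] using this

/-- Over a field, `⋂ ker (fᵢ ⊗ fⱼ) ⊆ K ⊗ V + V ⊗ K` for `K = ⋂ ker fᵢ`: the induced maps on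
`V ⧸ K` are jointly injective, hence so are their pairwise tensor products on
`(V ⧸ K) ⊗ (V ⧸ K)`. -/
lemma mem_sup_of_map_eq_zero {ι V : Type} {U : ι → Type}
    [AddCommGroup V] [Module k V] [∀ i, AddCommGroup (U i)] [∀ i, Module k (U i)]
    (f : ∀ i, V →ₗ[k] U i) (K : Submodule k V) (hK : ∀ v, v ∈ K ↔ ∀ i, f i v = 0)
    (t : V ⊗[k] V) (ht : ∀ i j, TensorProduct.map (f i) (f j) t = 0) :
    t ∈ LinearMap.range (K.subtype.rTensor V) ⊔ LinearMap.range (K.subtype.lTensor V) := by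
  have hle : ∀ i, K ≤ LinearMap.ker (f i) := fun i v hv => (hK v).1 hv i
  have hex : Function.Exact K.subtype K.mkQ := by
    rw [LinearMap.exact_iff]; simp
  have hker := TensorProduct.map_ker hex K.mkQ_surjective hex K.mkQ_surjective
  rw [sup_comm, ← hker, LinearMap.mem_ker]
  apply eq_zero_of_map_eq_zero (fun i => K.liftQ (f i) (hle i))
  · intro v hv
    obtain ⟨v, rfl⟩ := K.mkQ_surjective v
    simp only [Submodule.mkQ_apply, Submodule.liftQ_apply] at hv
    simpa using (hK v).2 hv
  · intro i j
    rw [← LinearMap.comp_apply, ← TensorProduct.map_comp, Submodule.liftQ_mkQ,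
      Submodule.liftQ_mkQ, ht]

end TensorKernel

/-! ### Prepending a letter map -/

section Steps

open Coalgebra HopfAlgebra

variable {k H A B C D : Type} [Field k] [Ring H] [HopfAlgebra k H]
  [AddCommGroup A] [Module k A] [AddCommGroup B] [Module k B]
  [AddCommGroup C] [Module k C] [AddCommGroup D] [Module k D]

lemma exists_split_nil (g : H →ₗ[k] C) :
    ∃ c : C →ₗ[k] k ⊗[k] C, TensorProduct.map counit g ∘ₗ comul = c ∘ₗ g := by
  refine ⟨(TensorProduct.lid k C).symm.toLinearMap, ?_⟩
  rw [← LinearMap.lTensor_comp_rTensor, LinearMap.comp_assoc, rTensor_counit_comp_comul]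
  ext; simp

/-- Prepending a letter map `ρ` to a factorization of `(f ⊗ g) ∘ Δ` through `h` gives a
factorization of `(((ρ ⊗ f) ∘ Δ) ⊗ g) ∘ Δ` through `(ρ ⊗ h) ∘ Δ`, by coassociativity. -/
lemma exists_split_cons (ρ : H →ₗ[k] A) (f : H →ₗ[k] B) (g : H →ₗ[k] C) (h : H →ₗ[k] D)
    (hc : ∃ c : D →ₗ[k] B ⊗[k] C, TensorProduct.map f g ∘ₗ comul = c ∘ₗ h) :
    ∃ c : A ⊗[k] D →ₗ[k] (A ⊗[k] B) ⊗[k] C,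
      TensorProduct.map (TensorProduct.map ρ f ∘ₗ comul) g ∘ₗ comul =
        c ∘ₗ (TensorProduct.map ρ h ∘ₗ comul) := by
  obtain ⟨c, hc⟩ := hc
  refine ⟨(TensorProduct.assoc k A B C).symm.toLinearMap ∘ₗ c.lTensor A, ?_⟩
  calc TensorProduct.map (TensorProduct.map ρ f ∘ₗ comul) g ∘ₗ comul
      = TensorProduct.map (TensorProduct.map ρ f) g ∘ₗ (comul.rTensor H ∘ₗ comul) := by
        rw [← LinearMap.comp_assoc, LinearMap.map_comp_rTensor]
    _ = TensorProduct.map (TensorProduct.map ρ f) g ∘ₗ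
          (TensorProduct.assoc k H H H).symm.toLinearMap ∘ₗ comul.lTensor H ∘ₗ comul := by
        rw [coassoc_symm]
    _ = (TensorProduct.assoc k A B C).symm.toLinearMap ∘ₗ
          (TensorProduct.map ρ (TensorProduct.map f g) ∘ₗ comul.lTensor H) ∘ₗ comul := by
        simp only [← LinearMap.comp_assoc, TensorProduct.map_map_comp_assoc_symm_eq]
    _ = _ := by
        rw [LinearMap.map_comp_lTensor, hc, ← LinearMap.lTensor_comp_map]
        simp only [LinearMap.comp_assoc]

/-- The inductive step for the antipode: since `Δ ∘ S` flips the tensor factors,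
`(ρ ⊗ f) ∘ Δ ∘ S` factors through `(f' ⊗ ρ) ∘ Δ`. In `hc` the map `ρ` appears as the one-letter
word map `(ρ ⊗ ε) ∘ Δ`. -/
lemma exists_antipode_cons (ρ : H →ₗ[k] A) (f : H →ₗ[k] B) (f' : H →ₗ[k] C) (h : H →ₗ[k] D)
    (hρ : ∃ s : A →ₗ[k] A, ρ ∘ₗ antipode k = s ∘ₗ ρ)
    (hf : ∃ d : C →ₗ[k] B, f ∘ₗ antipode k = d ∘ₗ f')
    (hc : ∃ c : D →ₗ[k] C ⊗[k] (A ⊗[k] k),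
      TensorProduct.map f' (TensorProduct.map ρ counit ∘ₗ comul) ∘ₗ comul = c ∘ₗ h) :
    ∃ d : D →ₗ[k] A ⊗[k] B,
      (TensorProduct.map ρ f ∘ₗ comul) ∘ₗ antipode k = d ∘ₗ h := by
  obtain ⟨s, hs⟩ := hρ
  obtain ⟨d, hd⟩ := hf
  obtain ⟨c, hc⟩ := hc
  have h1 : TensorProduct.map ρ counit ∘ₗ comul = (TensorProduct.rid k A).symm.toLinearMap ∘ₗ ρ := by
    rw [← LinearMap.rTensor_comp_lTensor, LinearMap.comp_assoc, lTensor_counit_comp_comul]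
    ext; simp
  have h2 : TensorProduct.map f' ρ ∘ₗ comul =
      ((TensorProduct.rid k A).toLinearMap.lTensor C ∘ₗ c) ∘ₗ h := by
    rw [LinearMap.comp_assoc, ← hc, h1, ← LinearMap.comp_assoc, LinearMap.lTensor_comp_map,
      ← LinearMap.comp_assoc]
    simp
  refine ⟨(TensorProduct.map s d ∘ₗ (TensorProduct.comm k C A).toLinearMap) ∘ₗ
    (TensorProduct.rid k A).toLinearMap.lTensor C ∘ₗ c, ?_⟩
  rw [LinearMap.comp_assoc h, ← h2, LinearMap.comp_assoc, comul_comp_antipode,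
    ← LinearMap.comp_assoc, ← TensorProduct.map_comp, hs, hd, TensorProduct.map_comp]
  simp only [← LinearMap.comp_assoc]
  congr 1
  simp only [LinearMap.comp_assoc]
  congr 1
  ext; simp

/-- If `ρ` and `f` intertwine left multiplication on `H` with linear actions on their codomains,
then so does `(ρ ⊗ f) ∘ Δ`, because `Δ` is multiplicative. -/
lemma exists_mul_cons (ρ : H →ₗ[k] A) (f : H →ₗ[k] B)
    (hρ : ∃ m : H →ₗ[k] A →ₗ[k] A, ∀ h x, ρ (h * x) = m h (ρ x))
    (hf : ∃ m : H →ₗ[k] B →ₗ[k] B, ∀ h x, f (h * x) = m h (f x)) :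
    ∃ m : H →ₗ[k] A ⊗[k] B →ₗ[k] A ⊗[k] B, ∀ h x,
      (TensorProduct.map ρ f ∘ₗ comul) (h * x) =
        m h ((TensorProduct.map ρ f ∘ₗ comul) x) := by
  obtain ⟨m, hm⟩ := hρ
  obtain ⟨n, hn⟩ := hf
  have key : ∀ s t : H ⊗[k] H, TensorProduct.map ρ f (s * t) =
      TensorProduct.homTensorHomMap (.id k) A B A B (TensorProduct.map m n s)
        (TensorProduct.map ρ f t) := by
    intro s t
    induction s with
    | zero => simp
    | add a b ha hb => simp only [add_mul, map_add, ha, hb, LinearMap.add_apply]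
    | tmul a b =>
      induction t with
      | zero => simp
      | add c d hc hd => simp only [mul_add, map_add, hc, hd]
      | tmul c d => simp [hm, hn]
  refine ⟨TensorProduct.homTensorHomMap (.id k) A B A B ∘ₗ TensorProduct.map m n ∘ₗ comul, ?_⟩
  intro h x
  simp only [LinearMap.comp_apply, Bialgebra.comul_mul, key]

end Steps

/-! ### The common kernel of the word maps -/

section WordLemmas

open Coalgebra HopfAlgebra

variable {k : Type} [Field k] {I : Type} {H : Type} [Ring H] [HopfAlgebra k H]
  {A : I → Type} [∀ i, Ring (A i)] [∀ i, HopfAlgebra k (A i)] (π : ∀ i, H →ₐc[k] A i)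

lemma letterMap_comp_antipode (a : I ⊕ I) :
    ∃ s : A (letterIndex a) →ₗ[k] A (letterIndex a),
      letterMap π a ∘ₗ antipode k = s ∘ₗ letterMap π a := by
  refine ⟨antipode k, ?_⟩
  cases a with
  | inl i => exact (antipode_comp_bialgHom (π i)).symm
  | inr i =>
    have h := antipode_comp_bialgHom (π i)
    change ((π i).toLinearMap ∘ₗ antipode k) ∘ₗ antipode k =
      antipode k ∘ₗ ((π i).toLinearMap ∘ₗ antipode k)
    rw [← LinearMap.comp_assoc, h]

lemma letterMap_mul (a : I ⊕ I) :
    ∃ m : H →ₗ[k] A (letterIndex a) →ₗ[k] A (letterIndex a),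
      ∀ h x, letterMap π a (h * x) = m h (letterMap π a x) := by
  cases a with
  | inl i => exact ⟨LinearMap.mul k (A i) ∘ₗ (π i).toLinearMap, fun h x => map_mul (π i) h x⟩
  | inr i =>
    refine ⟨(LinearMap.mul k (A i)).flip ∘ₗ ((π i).toLinearMap ∘ₗ antipode k), fun h x => ?_⟩
    change π i (antipode k (h * x)) = π i (antipode k x) * π i (antipode k h)
    rw [antipode_mul_antidistrib, map_mul]

lemma wordMap_mul : ∀ w : List (I ⊕ I),
    ∃ m : H →ₗ[k] wordSpace k A w →ₗ[k] wordSpace k A w,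
      ∀ h x, wordMap π w (h * x) = m h (wordMap π w x)
  | [] => ⟨(LinearMap.mul k k ∘ₗ counit : H →ₗ[k] k →ₗ[k] k),
      fun h x => (Bialgebra.counit_mul (R := k) h x :)⟩
  | a :: w => exists_mul_cons (letterMap π a) (wordMap π w) (letterMap_mul π a) (wordMap_mul w)

/-- `(π_w ⊗ π_v) ∘ Δ` is `π_{wv}` up to reassociating tensor factors. -/
lemma wordMap_append (v : List (I ⊕ I)) : ∀ w : List (I ⊕ I),
    ∃ c : wordSpace k A (w ++ v) →ₗ[k] wordSpace k A w ⊗[k] wordSpace k A v,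
      TensorProduct.map (wordMap π w) (wordMap π v) ∘ₗ comul = c ∘ₗ wordMap π (w ++ v)
  | [] => exists_split_nil (wordMap π v)
  | a :: w => exists_split_cons (letterMap π a) (wordMap π w) (wordMap π v)
      (wordMap π (w ++ v)) (wordMap_append v w)

/-- `π_w ∘ S` factors through the word map of the reversed word, since `S` reverses
comultiplication and each letter map satisfies `ρ ∘ S = S ∘ ρ`. -/
lemma wordMap_antipode (w : List (I ⊕ I)) :
    ∃ d : wordSpace k A w.reverse →ₗ[k] wordSpace k A w,
      wordMap π w ∘ₗ antipode k = d ∘ₗ wordMap π w.reverse := by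
  induction w with
  | nil => exact ⟨LinearMap.id, counit_comp_antipode⟩
  | cons a w ih =>
    rw [List.reverse_cons]
    exact exists_antipode_cons (letterMap π a) (wordMap π w) (wordMap π w.reverse)
      (wordMap π (w.reverse ++ [a])) (letterMap_comp_antipode π a) ih
      (wordMap_append π [a] w.reverse)

/-- The common kernel of all word maps, as a left ideal. -/
noncomputable def wordKernel : Ideal H where
  carrier := {x | ∀ w, wordMap π w x = 0}
  zero_mem' := fun w => map_zero _
  add_mem' := fun {x y} hx hy w => by rw [map_add, hx w, hy w, add_zero]
  smul_mem' := fun h x hx w => by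
    obtain ⟨m, hm⟩ := wordMap_mul π w
    rw [smul_eq_mul, hm, hx w, map_zero]

lemma isHopfIdeal_wordKernel : IsHopfIdeal (k := k) (wordKernel π) := by
  refine ⟨fun x hx => hx [], fun x hx => ?_, fun x hx w => ?_⟩
  · refine mem_sup_of_map_eq_zero (fun w => wordMap π w) _ (fun v => Iff.rfl) _ fun w v => ?_
    obtain ⟨c, hc⟩ := wordMap_append π v w
    have := LinearMap.congr_fun hc x
    simp only [LinearMap.comp_apply] at this
    rw [this, hx, map_zero]
  · obtain ⟨d, hd⟩ := wordMap_antipode π w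
    have := LinearMap.congr_fun hd x
    simp only [LinearMap.comp_apply] at this
    rw [this, hx, map_zero]

lemma apply_eq_zero_of_mem_wordKernel {x : H} (hx : x ∈ wordKernel π) (i : I) : π i x = 0 := by
  -- The one-letter word map is `π i` up to the identification `A i ⊗ k ≃ A i`.
  have h : TensorProduct.map (π i).toLinearMap counit (comul x) = (0 : A i ⊗[k] k) :=
    hx [Sum.inl i]
  rw [← LinearMap.rTensor_comp_lTensor, LinearMap.comp_apply, lTensor_counit_comul] at h
  have h' := congrArg (TensorProduct.rid k (A i)) h
  simp only [LinearMap.rTensor_tmul, TensorProduct.rid_tmul, one_smul, map_zero] at h'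
  exact h'

/-- A Hopf ideal on which every `π i` vanishes is killed by every word map. -/
lemma wordMap_eq_zero_of_mem {J : Ideal H} (hJ : IsHopfIdeal (k := k) J)
    (hπ : ∀ i, ∀ x ∈ J, π i x = 0) :
    ∀ (w : List (I ⊕ I)), ∀ x ∈ J, wordMap π w x = 0
  | [], x, hx => hJ.1 x hx
  | a :: w, x, hx => by
    have ha : letterMap π a ∘ₗ (Submodule.restrictScalars k J).subtype = 0 := by
      ext ⟨y, hy⟩
      cases a with
      | inl i => exact hπ i y hy
      | inr i => exact hπ i _ (hJ.2.2 y hy)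
    have hw : wordMap π w ∘ₗ (Submodule.restrictScalars k J).subtype = 0 := by
      ext ⟨y, hy⟩
      exact wordMap_eq_zero_of_mem hJ hπ w y hy
    change TensorProduct.map (letterMap π a) (wordMap π w) (comul x) = 0
    rw [← LinearMap.mem_ker]
    refine (sup_le ?_ ?_ : _ ≤ LinearMap.ker _) (hJ.2.1 x hx)
    · rw [LinearMap.range_le_ker_iff, LinearMap.map_comp_rTensor, ha, TensorProduct.map_zero_left]
    · rw [LinearMap.range_le_ker_iff, LinearMap.map_comp_lTensor, hw, TensorProduct.map_zero_right]

end WordLemmas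

/-- multi-map Hopf image description. A family of Hopf algebra maps
`π_i : H → A_i` is jointly inner faithful if and only if the kernels of all the word maps
`π_𝐢 = (ρ_{i_1} ⊗ ⋯ ⊗ ρ_{i_k}) ∘ Δ^{(k)}` (where `ρ_i = π_i` and `ρ_{i*} = π_i ∘ S`)
intersect to zero. -/
theorem jointlyInnerFaithful_iff_iInf_wordMap_ker
    {k : Type} [Field k] {I : Type} {H : Type} [Ring H] [HopfAlgebra k H]
    {A : I → Type} [∀ i, Ring (A i)] [∀ i, HopfAlgebra k (A i)]
    (π : ∀ i, H →ₐc[k] A i) :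
    JointlyInnerFaithful k (fun i => (π i : H →ₐ[k] A i)) ↔
      ∀ x : H, (∀ w : List (I ⊕ I), wordMap π w x = 0) → x = 0 := by
  constructor
  · intro h x hx
    have hbot := h (wordKernel π) (isHopfIdeal_wordKernel π)
      fun i y hy => apply_eq_zero_of_mem_wordKernel π hy i
    have hmem : x ∈ wordKernel π := hx
    rwa [hbot, Ideal.mem_bot] at hmem
  · intro h J hJ hπ
    rw [eq_bot_iff]
    intro x hx
    exact h x fun w => wordMap_eq_zero_of_mem π hJ hπ w x hx
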